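/- (Orthonormality of the spherical harmonics.) For all integers l, l' ≥ 0 and −l ≤ m ≤ l, −l' ≤ m' ≤ l', one has ∫_0^{2π} ∫_0^{π} Y_{lm}(θ,φ)·\overline{Y_{l'm'}(θ,φ)}·sin θ dθ dφ = 1 if (l,m) = (l',m') and 0 otherwise. -/

import Mathlib

/-!
The integrand splits into a function of `φ` times a function of `θ`. The `φ`-integral of
`exp (i (m - m') φ)` is `2π δ_{mm'}`, which leaves the case `m = m'`. With `k = |m|` and `x = cos θ`,
the `θ`-integral becomes, up to normalization, the integral over `[-1, 1]` of
`(1 - x²)^k P_l^{(k)} P_{l'}^{(k)}`, where `l ≤ l'` may be assumed.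

Integrating by parts `k` times turns it into `± ∫ R P_{l'}`, where
`R = ((x² - 1)^k P_l^{(k)})^{(k)}` has degree at most `l` and leading coefficient
`(l + k)! / (l - k)!` times that of `P_l`. By Rodrigues' formula, another `l'` integrations by parts
give a multiple of `∫ R^{(l')} (x² - 1)^{l'}`. Here `R^{(l')}` vanishes if `l < l'` and is a constant
if `l = l'`, in which case the value follows from `∫ (x² - 1)^l`
(`integral_sq_sub_one_pow`). Both rounds of integration by parts are instances of
`integral_mul_iterate_derivative`.
-/

open scoped BigOperators

/-- Legendre polynomial via Rodrigues' formula. -/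
noncomputable def legendreP (l : ℕ) (x : ℝ) : ℝ :=
  (1 / (2 ^ l * Nat.factorial l : ℝ)) * iteratedDeriv l (fun y : ℝ => (y ^ 2 - 1) ^ l) x

/-- `Θ_{lm}` in the definition of the spherical harmonics. -/
noncomputable def thetaLM (l : ℕ) (m : ℤ) (x : ℝ) : ℝ :=
  if 0 ≤ m then
    Real.sqrt ((2 * l + 1) / 2 * (Nat.factorial (l - m.toNat) : ℝ) /
        (Nat.factorial (l + m.toNat) : ℝ)) *
      Real.sqrt (1 - x ^ 2) ^ m.toNat * iteratedDeriv m.toNat (legendreP l) x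
  else
    (-1 : ℝ) ^ (-m).toNat *
      (Real.sqrt ((2 * l + 1) / 2 * (Nat.factorial (l - (-m).toNat) : ℝ) /
          (Nat.factorial (l + (-m).toNat) : ℝ)) *
        Real.sqrt (1 - x ^ 2) ^ (-m).toNat * iteratedDeriv (-m).toNat (legendreP l) x)

/-- Spherical harmonic `Y_{lm}(θ,φ) = (1/√(2π)) e^{imφ} Θ_{lm}(cos θ)`. -/
noncomputable def sphericalHarmonic (l : ℕ) (m : ℤ) (θ φ : ℝ) : ℂ :=
  ((1 / Real.sqrt (2 * Real.pi) : ℝ) : ℂ) * Complex.exp (Complex.I * m * φ) *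
    ((thetaLM l m (Real.cos θ) : ℝ) : ℂ)

/-! ### Legendre polynomials as elements of `ℝ[X]` -/

open Polynomial in
/-- The Legendre polynomial as an element of `ℝ[X]`. -/
noncomputable def legendrePoly (l : ℕ) : ℝ[X] :=
  C (1 / (2 ^ l * Nat.factorial l : ℝ)) * derivative^[l] ((X ^ 2 - 1) ^ l)

section
open Polynomial

lemma iteratedDeriv_polynomial_eval (p : ℝ[X]) (n : ℕ) :
    iteratedDeriv n (fun x => p.eval x) = fun x => (derivative^[n] p).eval x := by
  induction n with
  | zero => simp
  | succ n ih =>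
    rw [iteratedDeriv_succ, ih, Function.iterate_succ_apply']
    funext x
    exact Polynomial.deriv _

lemma legendreP_eq_eval (l : ℕ) : legendreP l = fun x => (legendrePoly l).eval x := by
  funext x
  have h : (fun y : ℝ => (y ^ 2 - 1) ^ l) = fun y => (((X ^ 2 - 1) ^ l : ℝ[X])).eval y := by
    funext y; simp
  rw [legendreP, h, iteratedDeriv_polynomial_eval, legendrePoly, eval_mul, eval_C]

/-! ### Integrals of polynomials over `[-1, 1]` -/

lemma integral_eval_derivative (p : ℝ[X]) :
    ∫ x in (-1:ℝ)..1, (derivative p).eval x = p.eval 1 - p.eval (-1) :=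
  intervalIntegral.integral_eq_sub_of_hasDerivAt (fun x _ => p.hasDerivAt x)
    ((derivative p).continuous.intervalIntegrable _ _)

/-- Repeated integration by parts: the boundary terms vanish because every derivative of `f` of
order less than `n` still has a factor `X ^ 2 - 1`. -/
lemma integral_mul_iterate_derivative (n : ℕ) (f g : ℝ[X]) (hf : (X ^ 2 - 1) ^ n ∣ f) :
    ∫ x in (-1:ℝ)..1, (f * derivative^[n] g).eval x =
      (-1) ^ n * ∫ x in (-1:ℝ)..1, (derivative^[n] f * g).eval x := by
  induction n generalizing f with
  | zero => simp
  | succ n ih =>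
    have hd : (X ^ 2 - 1) ^ n ∣ derivative f := by
      obtain ⟨q, rfl⟩ := hf
      rw [derivative_mul, derivative_pow_succ]
      exact dvd_add ⟨C ((n : ℝ) + 1) * derivative (X ^ 2 - 1) * q, by ring⟩
        ⟨(X ^ 2 - 1) * derivative q, by ring⟩
    have hb := integral_eval_derivative (f * derivative^[n] g)
    have h0 : ∀ x : ℝ, x ^ 2 = 1 → f.eval x = 0 := by
      intro x hx
      obtain ⟨q, rfl⟩ := hf
      simp [hx]
    rw [eval_mul, eval_mul, h0 1 (by norm_num), h0 (-1) (by norm_num), derivative_mul] at hb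
    simp only [eval_add] at hb
    rw [intervalIntegral.integral_add
      ((Polynomial.continuous _).intervalIntegrable _ _)
      ((Polynomial.continuous _).intervalIntegrable _ _), ih _ hd,
      ← Function.iterate_succ_apply' derivative, ← Function.iterate_succ_apply derivative] at hb
    rw [pow_succ]
    linarith

lemma integral_sq_sub_one_pow (n : ℕ) :
    ∫ x in (-1:ℝ)..1, (((X ^ 2 - 1) ^ n : ℝ[X])).eval x =
      (-1) ^ n * (2 ^ (2 * n + 1) * (Nat.factorial n : ℝ) ^ 2 / Nat.factorial (2 * n + 1)) := by
  induction n with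
  | zero => norm_num
  | succ n ih =>
    -- integrate `(x (x² - 1)ⁿ⁺¹)' = (2n + 3) (x² - 1)ⁿ⁺¹ + 2 (n + 1) (x² - 1)ⁿ`
    have hb := integral_eval_derivative (X * (X ^ 2 - 1) ^ (n + 1))
    have e : derivative (X * (X ^ 2 - 1) ^ (n + 1) : ℝ[X]) =
        C (2 * n + 3 : ℝ) * (X ^ 2 - 1) ^ (n + 1) + C (2 * (n + 1) : ℝ) * (X ^ 2 - 1) ^ n := by
      rw [derivative_mul, derivative_pow_succ]
      simp only [derivative_X, derivative_sub, derivative_X_pow, derivative_one, C_add, C_mul,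
        Nat.cast_ofNat, map_natCast, map_ofNat, map_one]
      ring
    rw [e] at hb
    simp only [eval_add, eval_C_mul] at hb
    rw [intervalIntegral.integral_add
      (((Polynomial.continuous _).const_mul _).intervalIntegrable _ _)
      (((Polynomial.continuous _).const_mul _).intervalIntegrable _ _),
      intervalIntegral.integral_const_mul, intervalIntegral.integral_const_mul, ih] at hb
    simp at hb
    have h3 : (2 * n + 3 : ℝ) ≠ 0 := by positivity
    apply mul_left_cancel₀ h3
    simp only [eval_pow, eval_sub, eval_X, eval_one]
    rw [eq_neg_of_add_eq_zero_left hb]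
    rw [show 2 * (n + 1) + 1 = (2 * n + 1) + 1 + 1 by ring, Nat.factorial_succ (2 * n + 1 + 1),
      Nat.factorial_succ (2 * n + 1), Nat.factorial_succ n]
    have := Nat.factorial_ne_zero (2 * n + 1)
    push_cast
    field_simp
    ring

/-! ### Degrees and leading coefficients -/

lemma iterate_derivative_of_natDegree_le (p : ℝ[X]) (n : ℕ) (h : p.natDegree ≤ n) :
    derivative^[n] p = C (Nat.factorial n * p.coeff n) := by
  ext k
  rw [coeff_iterate_derivative, coeff_C]
  split_ifs with hk
  · subst hk
    simp [Nat.descFactorial_self]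
  · rw [coeff_eq_zero_of_natDegree_lt (by omega)]
    simp

lemma natDegree_sq_sub_one_pow (n : ℕ) : ((X ^ 2 - 1 : ℝ[X]) ^ n).natDegree = 2 * n := by
  rw [natDegree_pow, show (X ^ 2 - 1 : ℝ[X]) = X ^ 2 - C 1 by simp, natDegree_X_pow_sub_C, mul_comm]

lemma coeff_sq_sub_one_pow (n : ℕ) : ((X ^ 2 - 1 : ℝ[X]) ^ n).coeff (2 * n) = 1 := by
  have h : ((X ^ 2 - 1 : ℝ[X]) ^ n).Monic := by
    rw [show (X ^ 2 - 1 : ℝ[X]) = X ^ 2 - C 1 by simp]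
    exact (monic_X_pow_sub_C 1 two_ne_zero).pow n
  have := h.coeff_natDegree
  rwa [natDegree_sq_sub_one_pow] at this

lemma natDegree_legendrePoly_le (l : ℕ) : (legendrePoly l).natDegree ≤ l := by
  refine (natDegree_C_mul_le _ _).trans ((natDegree_iterate_derivative _ _).trans ?_)
  rw [natDegree_sq_sub_one_pow]
  omega

lemma coeff_legendrePoly (l : ℕ) : (legendrePoly l).coeff l =
    (Nat.factorial (2 * l) : ℝ) / (2 ^ l * (Nat.factorial l : ℝ) ^ 2) := by
  rw [legendrePoly, coeff_C_mul, coeff_iterate_derivative, ← two_mul, coeff_sq_sub_one_pow,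
    nsmul_eq_mul, mul_one]
  have h := Nat.factorial_mul_descFactorial (show l ≤ 2 * l by omega)
  rw [show 2 * l - l = l by omega] at h
  rw [← h]
  have := Nat.factorial_ne_zero l
  push_cast
  field_simp

/-- `(d/dx)^m ((x² - 1)^m (d/dx)^m P_l)`, which is a multiple of `P_l`; only its degree and its
leading coefficient are used. -/
noncomputable def legendreAux (l m : ℕ) : ℝ[X] :=
  derivative^[m] ((X ^ 2 - 1) ^ m * derivative^[m] (legendrePoly l))

lemma natDegree_legendreAux_le (l m : ℕ) (hm : m ≤ l) : (legendreAux l m).natDegree ≤ l := by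
  refine (natDegree_iterate_derivative _ _).trans ?_
  have h1 := natDegree_mul_le (p := (X ^ 2 - 1 : ℝ[X]) ^ m) (q := derivative^[m] (legendrePoly l))
  have h2 := natDegree_iterate_derivative (legendrePoly l) m
  have h3 := natDegree_legendrePoly_le l
  rw [natDegree_sq_sub_one_pow] at h1
  omega

lemma coeff_legendreAux (l m : ℕ) (hm : m ≤ l) : (legendreAux l m).coeff l =
    (Nat.factorial (l + m) : ℝ) / Nat.factorial (l - m) * (legendrePoly l).coeff l := by
  have h2 : (derivative^[m] (legendrePoly l)).natDegree ≤ l - m :=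
    (natDegree_iterate_derivative _ _).trans (Nat.sub_le_sub_right (natDegree_legendrePoly_le l) m)
  rw [legendreAux, coeff_iterate_derivative, show l + m = 2 * m + (l - m) by omega,
    coeff_mul_add_eq_of_natDegree_le (natDegree_sq_sub_one_pow m).le h2, coeff_sq_sub_one_pow,
    coeff_iterate_derivative, show 2 * m + (l - m) = l + m by omega, Nat.sub_add_cancel hm]
  have e1 := Nat.factorial_mul_descFactorial (show m ≤ l + m by omega)
  have e2 := Nat.factorial_mul_descFactorial hm
  rw [Nat.add_sub_cancel] at e1
  rw [← e1, ← e2]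
  have := Nat.factorial_ne_zero (l - m)
  simp only [nsmul_eq_mul]
  push_cast
  field_simp

/-! ### Orthogonality of the associated Legendre functions -/

lemma integral_legendre_of_le (l l' m : ℕ) (hm : m ≤ l) (hl : l ≤ l') :
    ∫ x in (-1:ℝ)..1, ((X ^ 2 - 1) ^ m * derivative^[m] (legendrePoly l) *
        derivative^[m] (legendrePoly l')).eval x =
      if l = l' then (-1) ^ m * (2 / (2 * l + 1) *
        ((Nat.factorial (l + m) : ℝ) / Nat.factorial (l - m))) else 0 := by
  rw [integral_mul_iterate_derivative m _ _ (Dvd.intro _ rfl)]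
  change (-1) ^ m * ∫ x in (-1:ℝ)..1, (legendreAux l m * legendrePoly l').eval x = _
  have e : legendreAux l m * legendrePoly l' = C (1 / (2 ^ l' * Nat.factorial l' : ℝ)) *
      ((legendreAux l m) * derivative^[l'] ((X ^ 2 - 1) ^ l')) := by
    rw [legendrePoly]; ring
  have hI : ∫ x in (-1:ℝ)..1, (legendreAux l m * derivative^[l'] ((X ^ 2 - 1) ^ l')).eval x =
      (-1) ^ l' * ∫ x in (-1:ℝ)..1, (derivative^[l'] (legendreAux l m) * (X ^ 2 - 1) ^ l').eval x := by
    have h := integral_mul_iterate_derivative l' ((X ^ 2 - 1) ^ l') (legendreAux l m) dvd_rfl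
    simp only [mul_comm (legendreAux l m), mul_comm (derivative^[l'] (legendreAux l m))]
    rw [h, ← mul_assoc, ← mul_pow]
    simp
  have hdeg := natDegree_legendreAux_le l m hm
  rw [e]
  simp only [eval_C_mul]
  rw [intervalIntegral.integral_const_mul, hI,
    iterate_derivative_of_natDegree_le _ _ (hdeg.trans hl)]
  simp only [eval_C_mul]
  rw [intervalIntegral.integral_const_mul, integral_sq_sub_one_pow]
  split_ifs with h
  · subst h
    rw [coeff_legendreAux l m hm, coeff_legendrePoly, Nat.factorial_succ (2 * l)]
    have := Nat.factorial_ne_zero l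
    have := Nat.factorial_ne_zero (2 * l)
    have := Nat.factorial_ne_zero (l - m)
    have hs : ((-1 : ℝ) ^ l) ^ 2 = 1 := by rw [← pow_mul, mul_comm, pow_mul]; simp
    push_cast
    field_simp
    rw [hs]
    ring
  · rw [coeff_eq_zero_of_natDegree_lt (by omega)]
    simp

lemma integral_legendre (l l' m : ℕ) (hm : m ≤ l) (hm' : m ≤ l') :
    ∫ x in (-1:ℝ)..1, (1 - x ^ 2) ^ m * ((derivative^[m] (legendrePoly l)).eval x *
        (derivative^[m] (legendrePoly l')).eval x) =
      if l = l' then 2 / (2 * l + 1) *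
        ((Nat.factorial (l + m) : ℝ) / Nat.factorial (l - m)) else 0 := by
  wlog hl : l ≤ l' generalizing l l'
  · have h := this l' l hm' hm (by omega)
    simp only [mul_comm (eval _ (derivative^[m] (legendrePoly l')))] at h
    rw [h, if_neg (by omega), if_neg (by omega)]
  have hs : (-1 : ℝ) ^ m * (-1) ^ m = 1 := by rw [← mul_pow]; simp
  have h := congrArg ((-1 : ℝ) ^ m * ·) (integral_legendre_of_le l l' m hm hl)
  simp only [mul_ite, mul_zero, ← mul_assoc, hs, one_mul] at h
  rw [mul_assoc] at h
  simp only [← mul_assoc]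
  simp only [mul_assoc] at h ⊢
  rw [← h, ← intervalIntegral.integral_const_mul]
  congr 1
  funext x
  simp only [eval_mul, eval_pow, eval_sub, eval_X, eval_one]
  rw [← mul_assoc ((-1) ^ m), ← mul_pow]
  ring

end

/-- The normalization constant of `Θ_{lm}` for `m ≥ 0`. -/
noncomputable def thetaNorm (l m : ℕ) : ℝ :=
  Real.sqrt ((2 * l + 1) / 2 * (Nat.factorial (l - m) : ℝ) / (Nat.factorial (l + m) : ℝ))

open Polynomial in
/-- The signs for `m < 0` and the square roots of `1 - x ^ 2` cancel in the product. -/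
lemma thetaLM_mul (l l' : ℕ) (m : ℤ) (x : ℝ) (hx : 0 ≤ 1 - x ^ 2) :
    thetaLM l m x * thetaLM l' m x = thetaNorm l m.natAbs * thetaNorm l' m.natAbs *
      ((1 - x ^ 2) ^ m.natAbs * ((derivative^[m.natAbs] (legendrePoly l)).eval x *
        (derivative^[m.natAbs] (legendrePoly l')).eval x)) := by
  have hsq : ∀ k : ℕ, (1 - x ^ 2) ^ k = Real.sqrt (1 - x ^ 2) ^ k * Real.sqrt (1 - x ^ 2) ^ k := by
    intro k
    rw [← mul_pow, Real.mul_self_sqrt hx]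
  simp only [thetaLM, thetaNorm, legendreP_eq_eval, iteratedDeriv_polynomial_eval]
  rw [hsq]
  split_ifs with h
  · rw [show m.toNat = m.natAbs by omega]
    ring
  · rw [show (-m).toNat = m.natAbs by omega]
    have hs : (-1 : ℝ) ^ m.natAbs * (-1) ^ m.natAbs = 1 := by rw [← mul_pow]; simp
    rw [mul_mul_mul_comm, hs]
    ring

open Polynomial in
lemma integral_thetaLM (l l' : ℕ) (m : ℤ) (hm : m.natAbs ≤ l) (hm' : m.natAbs ≤ l') :
    ∫ θ in (0:ℝ)..Real.pi, thetaLM l m (Real.cos θ) * thetaLM l' m (Real.cos θ) * Real.sin θ =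
      if l = l' then 1 else 0 := by
  set k := m.natAbs with hk
  let f : ℝ → ℝ := fun x => (1 - x ^ 2) ^ k * ((derivative^[k] (legendrePoly l)).eval x *
        (derivative^[k] (legendrePoly l')).eval x)
  have hf : Continuous f := by
    have h1 := (derivative^[k] (legendrePoly l)).continuous
    have h2 := (derivative^[k] (legendrePoly l')).continuous
    fun_prop
  have hsub := intervalIntegral.integral_comp_mul_deriv (a := 0) (b := Real.pi) (f := Real.cos)
    (f' := fun x => - Real.sin x) (g := f) (fun x _ => Real.hasDerivAt_cos x)
    (by fun_prop) hf
  rw [Real.cos_zero, Real.cos_pi, intervalIntegral.integral_symm (-1) 1,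
    integral_legendre l l' k hm hm'] at hsub
  have e : ∀ θ : ℝ, thetaLM l m (Real.cos θ) * thetaLM l' m (Real.cos θ) * Real.sin θ =
      -(thetaNorm l k * thetaNorm l' k) * ((f ∘ Real.cos) θ * - Real.sin θ) := by
    intro θ
    rw [thetaLM_mul l l' m _ (by nlinarith [Real.sin_sq_add_cos_sq θ, sq_nonneg (Real.sin θ)])]
    simp only [f, Function.comp]
    ring
  simp only [e]
  rw [intervalIntegral.integral_const_mul, hsub]
  split_ifs with h
  · subst h
    have hN : thetaNorm l k * thetaNorm l k =
        (2 * l + 1) / 2 * (Nat.factorial (l - k) : ℝ) / (Nat.factorial (l + k) : ℝ) :=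
      Real.mul_self_sqrt (by positivity)
    rw [hN]
    have := Nat.factorial_ne_zero (l - k)
    have := Nat.factorial_ne_zero (l + k)
    field_simp
  · simp

/-! ### The azimuthal integral and the spherical harmonics -/

lemma integral_exp_int (n : ℤ) :
    ∫ φ in (0:ℝ)..(2 * Real.pi), Complex.exp (Complex.I * n * φ) =
      if n = 0 then (2 * Real.pi : ℂ) else 0 := by
  split_ifs with h
  · subst h; simp
  · rw [integral_exp_mul_complex (mul_ne_zero Complex.I_ne_zero (by exact_mod_cast h))]
    have : Complex.exp (Complex.I * n * ((2 * Real.pi : ℝ) : ℂ)) = 1 := by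
      rw [← Complex.exp_int_mul_two_pi_mul_I n]
      congr 1
      push_cast
      ring
    rw [this]
    simp

/-- Orthonormality of the spherical harmonics:
`∫_0^{2π} ∫_0^{π} Y_{lm}·conj(Y_{l'm'})·sin θ dθ dφ = δ_{ll'}δ_{mm'}`. -/
theorem sphericalHarmonic_orthonormal (l l' : ℕ) (m m' : ℤ)
    (hm₁ : -(l : ℤ) ≤ m) (hm₂ : m ≤ (l : ℤ))
    (hm'₁ : -(l' : ℤ) ≤ m') (hm'₂ : m' ≤ (l' : ℤ)) :
    (∫ φ in (0:ℝ)..(2 * Real.pi), ∫ θ in (0:ℝ)..Real.pi,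
        sphericalHarmonic l m θ φ * starRingEnd ℂ (sphericalHarmonic l' m' θ φ)
          * (Real.sin θ : ℂ)) =
      if l = l' ∧ m = m' then 1 else 0 := by
  have hc : ((1 / Real.sqrt (2 * Real.pi) : ℝ) : ℂ) * ((1 / Real.sqrt (2 * Real.pi) : ℝ) : ℂ) =
      1 / (2 * Real.pi) := by
    rw [← Complex.ofReal_mul, div_mul_div_comm, Real.mul_self_sqrt (by positivity)]
    push_cast
    ring
  have e : ∀ φ θ : ℝ, sphericalHarmonic l m θ φ * starRingEnd ℂ (sphericalHarmonic l' m' θ φ)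
      * (Real.sin θ : ℂ) = (1 / (2 * Real.pi) * Complex.exp (Complex.I * (m - m' : ℤ) * φ)) *
        ((thetaLM l m (Real.cos θ) * thetaLM l' m' (Real.cos θ) * Real.sin θ : ℝ) : ℂ) := by
    intro φ θ
    have hexp : Complex.exp (Complex.I * (m - m' : ℤ) * φ) = Complex.exp (Complex.I * m * φ) *
        starRingEnd ℂ (Complex.exp (Complex.I * m' * φ)) := by
      rw [← Complex.exp_conj, ← Complex.exp_add]
      congr 1
      simp
      ring
    rw [hexp, ← hc]
    simp only [sphericalHarmonic, map_mul, Complex.conj_ofReal]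
    push_cast
    ring
  simp only [e]
  simp only [intervalIntegral.integral_const_mul, intervalIntegral.integral_mul_const,
    intervalIntegral.integral_ofReal]
  rw [integral_exp_int]
  by_cases h : m = m'
  · subst h
    rw [integral_thetaLM l l' m (by omega) (by omega)]
    have : (Real.pi : ℂ) ≠ 0 := by exact_mod_cast Real.pi_ne_zero
    by_cases hl : l = l' <;> simp [hl]
    field_simp
  · rw [if_neg (by omega), if_neg (by tauto)]
    simp
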